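/- For every real number a and all positive integers d, n, one has Σ_{k=1}^{n} C(n,k) · (−1)^k · ζ*_k({1}_d; a) = ((1−a)^n − 1)/n^d. -/

import Mathlib

/-- `ent m α` is the entry `n_{α+1}` (0-indexed access) of the index tuple `m`,
with junk value `1` out of range. -/
def ent {L : ℕ} (m : Fin L → ℕ) (α : ℕ) : ℕ :=
  if h : α < L then m ⟨α, h⟩ else 1

/-- The finite set of index tuples `(n₁,…,n_L)` with `n ≥ n₁ ≥ n₂ ≥ ⋯ ≥ n_L ≥ 1`. -/
def Idx (n L : ℕ) : Finset (Fin L → ℕ) :=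
  (Fintype.piFinset fun _ : Fin L => Finset.Icc 1 n).filter
    fun m => ∀ i j : Fin L, i ≤ j → m j ≤ m i

/-- Generalized multiple harmonic-star value
`ζ*_k(s₁,…,s_d; a) = ∑_{k ≥ n₁ ≥ ⋯ ≥ n_d ≥ 1} a^{n_d}/(n₁^{s₁} ⋯ n_d^{s_d})`. -/
noncomputable def zetaStarK (k : ℕ) (s : List ℕ) (a : ℝ) : ℝ :=
  ∑ m ∈ Idx k s.length,
    a ^ ent m (s.length - 1) / ∏ i : Fin s.length, (m i : ℝ) ^ s.get i

/-- Mneimneh-like sum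
`M_n^{(s₁,…,s_d)}(a,p) = ∑_{k=1}^n C(n,k)·p^k·(1-p)^{n-k}·ζ*_k(s;a)`. -/
noncomputable def M (n : ℕ) (s : List ℕ) (a p : ℝ) : ℝ :=
  ∑ k ∈ Finset.Icc 1 n, (n.choose k : ℝ) * p ^ k * (1 - p) ^ (n - k) * zetaStarK k s a

/-!
Peeling off the outermost index writes `ζ*_k(1, s; a)` as `∑ j ≤ k, ζ*_j(s; a) / j`. The alternating
tails of a row of Pascal's triangle satisfy `∑ k ≥ j, (-1)^k C(n,k) = (-1)^j C(n-1,j-1)`, and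
`C(n-1,j-1) / j = C(n,j) / n`, so interchanging the sums over `k` and `j` shows that each leading
argument `1` contributes a factor `1 / n`. What remains is the binomial expansion of `(1 - a)^n`.
-/

theorem ent_cons_succ {L : ℕ} (j : ℕ) (m : Fin L → ℕ) (α : ℕ) :
    ent (Fin.cons j m : Fin (L + 1) → ℕ) (α + 1) = ent m α := by
  by_cases h : α < L
  · simp only [ent, h, Nat.add_lt_add_right h 1, dif_pos]
    exact Fin.cons_succ (α := fun _ => ℕ) j m ⟨α, h⟩
  · simp [ent, h]

theorem Idx_zero (n : ℕ) : Idx n 0 = {default} := by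
  ext m
  simp [Idx, eq_iff_true_of_subsingleton]

theorem cons_mem_Idx_succ {n L j : ℕ} {m : Fin L → ℕ} :
    (Fin.cons j m : Fin (L + 1) → ℕ) ∈ Idx n (L + 1) ↔ j ∈ Finset.Icc 1 n ∧ m ∈ Idx j L := by
  simp only [Idx, Finset.mem_filter, Fintype.mem_piFinset, Finset.mem_Icc, Fin.forall_fin_succ,
    Fin.cons_zero, Fin.cons_succ, Fin.succ_le_succ_iff]
  constructor
  · rintro ⟨⟨hj, hm⟩, ⟨-, hjm⟩, hanti⟩
    exact ⟨hj, fun i => ⟨(hm i).1, hjm i (Fin.zero_le _)⟩, fun i => (hanti i).2⟩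
  · rintro ⟨hj, hm, hanti⟩
    exact ⟨⟨hj, fun i => ⟨(hm i).1, (hm i).2.trans hj.2⟩⟩,
      ⟨fun _ => le_rfl, fun i _ => (hm i).2⟩,
      fun i => ⟨fun h => absurd h (Fin.not_le.mpr (Fin.succ_pos i)), hanti i⟩⟩

theorem sum_Idx_succ {A : Type*} [AddCommMonoid A] (n L : ℕ) (f : (Fin (L + 1) → ℕ) → A) :
    ∑ m ∈ Idx n (L + 1), f m = ∑ j ∈ Finset.Icc 1 n, ∑ m ∈ Idx j L, f (Fin.cons j m) := by
  rw [Finset.sum_sigma']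
  refine Finset.sum_bij' (fun m _ => ⟨m 0, Fin.tail m⟩) (fun p _ => Fin.cons p.1 p.2)
    (fun m hm => ?_) (fun p hp => ?_) ?_ ?_ ?_
  · rw [← Fin.cons_self_tail m, cons_mem_Idx_succ] at hm
    exact Finset.mem_sigma.mpr hm
  · exact cons_mem_Idx_succ.mpr (Finset.mem_sigma.mp hp)
  all_goals simp

theorem zetaStarK_singleton (k s : ℕ) (a : ℝ) :
    zetaStarK k [s] a = ∑ j ∈ Finset.Icc 1 k, a ^ j / (j : ℝ) ^ s := by
  refine (sum_Idx_succ k 0 _).trans (Finset.sum_congr rfl fun j _ => ?_)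
  simp [Idx_zero, ent]

theorem zetaStarK_cons_of_ne_nil (k x : ℕ) {s : List ℕ} (hs : s ≠ []) (a : ℝ) :
    zetaStarK k (x :: s) a = ∑ j ∈ Finset.Icc 1 k, zetaStarK j s a / (j : ℝ) ^ x := by
  refine (sum_Idx_succ k s.length _).trans (Finset.sum_congr rfl fun j _ => ?_)
  rw [zetaStarK, Finset.sum_div]
  refine Finset.sum_congr rfl fun m _ => ?_
  have hlast : ent (Fin.cons j m : Fin (s.length + 1) → ℕ) s.length = ent m (s.length - 1) := by
    rw [← ent_cons_succ j m, Nat.sub_add_cancel (List.length_pos_of_ne_nil hs)]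
  have hprod : ∏ i : Fin (s.length + 1), ((Fin.cons j m : Fin (s.length + 1) → ℕ) i : ℝ) ^
      (x :: s).get i = (j : ℝ) ^ x * ∏ i, (m i : ℝ) ^ s.get i := by
    simp [Fin.prod_univ_succ]
  rw [div_div, mul_comm (∏ i, _), ← hprod, ← hlast]
  rfl

theorem sum_Icc_choose_mul_neg_one_pow {R : Type*} [CommRing R] (n j : ℕ) :
    ∑ k ∈ Finset.Icc (j + 1) (n + 1), ((n + 1).choose k : R) * (-1) ^ k =
      (-1) ^ (j + 1) * n.choose j := by
  rcases le_or_gt j n with hj | hj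
  · induction hj using Nat.decreasingInduction with
    | self => simp
    | of_succ j hj ih =>
      rw [← Finset.insert_Icc_add_one_left_eq_Icc (by omega), Finset.sum_insert (by simp), ih,
        Nat.choose_succ_succ]
      push_cast
      ring
  · simp [Nat.choose_eq_zero_of_lt hj, hj]

theorem sum_choose_mul_neg_one_pow_mul_pow {R : Type*} [CommRing R] (a : R) (n : ℕ) :
    ∑ k ∈ Finset.Icc 1 n, (n.choose k : R) * (-1) ^ k * a ^ k = (1 - a) ^ n - 1 := by
  have hexpand : (1 - a) ^ n = ∑ k ∈ Finset.range (n + 1), (n.choose k : R) * (-1) ^ k * a ^ k := by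
    rw [sub_eq_neg_add, add_pow]
    refine Finset.sum_congr rfl fun k _ => ?_
    rw [one_pow, mul_one, neg_pow, mul_comm, mul_assoc]
  rw [hexpand, Finset.range_eq_Ico, Finset.sum_eq_sum_Ico_succ_bot n.succ_pos,
    ← Finset.Ico_add_one_right_eq_Icc]
  simp

theorem sum_choose_mul_neg_one_pow_mul_sum_div {K : Type*} [Field K] [CharZero K]
    (f : ℕ → K) (n : ℕ) :
    ∑ k ∈ Finset.Icc 1 n, (n.choose k : K) * (-1) ^ k * ∑ j ∈ Finset.Icc 1 k, f j / j =
      (∑ k ∈ Finset.Icc 1 n, (n.choose k : K) * (-1) ^ k * f k) / n := by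
  simp only [Finset.mul_sum, Finset.sum_div]
  rw [Finset.sum_comm' (t' := Finset.Icc 1 n) (s' := fun j => Finset.Icc j n)
    (by simp only [Finset.mem_Icc]; omega)]
  refine Finset.sum_congr rfl fun j hj => ?_
  obtain ⟨hj_pos, hjn⟩ := Finset.mem_Icc.mp hj
  obtain ⟨i, rfl⟩ := Nat.exists_eq_add_of_le' hj_pos
  obtain ⟨N, rfl⟩ := Nat.exists_eq_add_of_le' (hj_pos.trans hjn)
  have habsorb : ((N + 1 : ℕ) : K) * N.choose i = (N + 1).choose (i + 1) * ((i + 1 : ℕ) : K) := by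
    exact_mod_cast Nat.add_one_mul_choose_eq N i
  rw [← Finset.sum_mul, sum_Icc_choose_mul_neg_one_pow, mul_div_assoc', div_eq_div_iff
    (Nat.cast_ne_zero.mpr i.succ_ne_zero) (Nat.cast_ne_zero.mpr N.succ_ne_zero)]
  linear_combination (-1) ^ (i + 1) * f (i + 1) * habsorb

theorem sum_choose_mul_zetaStarK_replicate_one_append {s : List ℕ} (hs : s ≠ []) (a : ℝ)
    (d n : ℕ) :
    ∑ k ∈ Finset.Icc 1 n, (n.choose k : ℝ) * (-1) ^ k * zetaStarK k (List.replicate d 1 ++ s) a =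
      (∑ k ∈ Finset.Icc 1 n, (n.choose k : ℝ) * (-1) ^ k * zetaStarK k s a) / (n : ℝ) ^ d := by
  induction d with
  | zero => simp
  | succ d ih =>
    have hne : List.replicate d 1 ++ s ≠ [] := List.append_ne_nil_of_right_ne_nil _ hs
    simp only [List.replicate_succ, List.cons_append, zetaStarK_cons_of_ne_nil _ _ hne, pow_one]
    rw [sum_choose_mul_neg_one_pow_mul_sum_div, ih, div_div, pow_succ]

/-- Alternating binomial sum of `ζ*_k({1}_d; a)`. -/
theorem stmt_6 (a : ℝ) (d n : ℕ) (hd : 0 < d) (hn : 0 < n) :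
    ∑ k ∈ Finset.Icc 1 n, (n.choose k : ℝ) * (-1) ^ k * zetaStarK k (List.replicate d 1) a =
      ((1 - a) ^ n - 1) / (n : ℝ) ^ d := by
  obtain ⟨e, rfl⟩ := Nat.exists_eq_add_of_le' hd
  rw [List.replicate_succ', sum_choose_mul_zetaStarK_replicate_one_append (List.cons_ne_nil 1 [])]
  simp only [zetaStarK_singleton, pow_one]
  rw [sum_choose_mul_neg_one_pow_mul_sum_div, sum_choose_mul_neg_one_pow_mul_pow, div_div,
    ← pow_succ']
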